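/- Let X be a separable Banach space, Y a Banach space, G ⊂ X open, and f : G → Y Borel measurable and Gâteaux differentiable at every point of G. Then f is Hadamard differentiable at all points of G except a set that is nowhere dense and σ-directionally porous. -/

import Mathlib

open Filter Metric Set Topology MeasureTheory

section CommonDefs
variable {X Y : Type*}

/-- `f` is (pointwise) Lipschitz at `x`:
`limsup_{y→x} ‖f y - f x‖/‖y - x‖ < ∞`. -/
def LipschitzAtPt [NormedAddCommGroup X] [NormedAddCommGroup Y]
    (f : X → Y) (x : X) : Prop :=
  ∃ K > (0:ℝ), ∃ δ > (0:ℝ), ∀ y ∈ ball x δ, ‖f y - f x‖ ≤ K * ‖y - x‖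

/-- The (two-sided) Hadamard directional derivative of `f` at `x` in direction `v` is `y`:
`(f (x + t z) - f x)/t → y` as `z → v`, `t → 0`, `t ≠ 0`. -/
def HadamardDerivAt [NormedAddCommGroup X] [NormedSpace ℝ X]
    [NormedAddCommGroup Y] [NormedSpace ℝ Y]
    (f : X → Y) (x v : X) (y : Y) : Prop :=
  Tendsto (fun p : ℝ × X => p.1⁻¹ • (f (x + p.1 • p.2) - f x))
    ((𝓝[≠] (0:ℝ)) ×ˢ 𝓝 v) (𝓝 y)

/-- The one-sided Hadamard directional derivative of `f` at `x` in direction `v` is `y`: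
`(f (x + t z) - f x)/t → y` as `z → v`, `t → 0+`. -/
def HadamardPlusDerivAt [NormedAddCommGroup X] [NormedSpace ℝ X]
    [NormedAddCommGroup Y] [NormedSpace ℝ Y]
    (f : X → Y) (x v : X) (y : Y) : Prop :=
  Tendsto (fun p : ℝ × X => p.1⁻¹ • (f (x + p.1 • p.2) - f x))
    ((𝓝[>] (0:ℝ)) ×ˢ 𝓝 v) (𝓝 y)

/-- `f` is Gâteaux differentiable at `x` with derivative the continuous linear map `L`. -/
def GateauxDiffAt [NormedAddCommGroup X] [NormedSpace ℝ X]
    [NormedAddCommGroup Y] [NormedSpace ℝ Y]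
    (f : X → Y) (x : X) (L : X →L[ℝ] Y) : Prop :=
  ∀ v : X, Tendsto (fun t : ℝ => t⁻¹ • (f (x + t • v) - f x)) (𝓝[≠] (0:ℝ)) (𝓝 (L v))

/-- `f` is Hadamard differentiable at `x` with derivative the continuous linear map `L`. -/
def HadamardDiffAt [NormedAddCommGroup X] [NormedSpace ℝ X]
    [NormedAddCommGroup Y] [NormedSpace ℝ Y]
    (f : X → Y) (x : X) (L : X →L[ℝ] Y) : Prop :=
  ∀ v : X, HadamardDerivAt f x v (L v)

/-- `A` is directionally porous at `x`. -/
def DirPorousAt [NormedAddCommGroup X] [NormedSpace ℝ X] (A : Set X) (x : X) : Prop :=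
  ∃ v : X, v ≠ 0 ∧ ∃ p > (0:ℝ), ∃ t : ℕ → ℝ, (∀ n, 0 < t n) ∧
    Tendsto t atTop (𝓝 (0:ℝ)) ∧ ∀ n, ball (x + t n • v) (p * t n) ∩ A = ∅

/-- `A` is a countable union of directionally porous sets. -/
def SigmaDirPorous [NormedAddCommGroup X] [NormedSpace ℝ X] (A : Set X) : Prop :=
  ∃ S : ℕ → Set X, A = ⋃ n, S n ∧ ∀ n, ∀ x ∈ S n, DirPorousAt (S n) x

/-- `A` is porous at `x`. -/
def PorousAt [NormedAddCommGroup X] (A : Set X) (x : X) : Prop :=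
  ∃ p > (0:ℝ), ∃ y : ℕ → X, (∀ n, y n ≠ x) ∧ Tendsto y atTop (𝓝 x) ∧
    ∀ n, ball (y n) (p * ‖y n - x‖) ∩ A = ∅

/-- `A` is a countable union of porous sets. -/
def SigmaPorous [NormedAddCommGroup X] (A : Set X) : Prop :=
  ∃ S : ℕ → Set X, A = ⋃ n, S n ∧ ∀ n, ∀ x ∈ S n, PorousAt (S n) x

end CommonDefs

/-!
Fix `x ∈ G`. The directions `v` with `‖f (x + q • v) - f x‖ ≤ m * q` for all small rational `q > 0`
form sets with the Baire property which exhaust `X` as `m` grows, so one of them is residual in some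
ball, and continuity of `f` along rays upgrades the estimate to a full open cone with vertex `x`.
Choosing the axis from a dense sequence and the aperture from `1 / (k + 1)`, countably many cone
sets `C` cover `G`.

If the line derivative of `f` at `x` in direction `v` is not a Hadamard derivative, there are
arbitrarily small `t` and `z` near `v` for which `f (x + t • v)` and `f (x + t • z)` are at distance
at least `ε * |t|`. A vertex whose cone of height proportional to `|t|` contains both points cannot
lie in `C`, so `C` misses a ball of radius proportional to `|t|` about such a vertex: every `C` is
directionally porous at `x`. Hence the exceptional set is σ-directionally porous; being outside
`interior (closure C)` for all `C`, it is also nowhere dense by Baire's theorem.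
-/

section Baire

lemma isNowhereDense_of_disjoint_interior_closure {X ι : Type*} [TopologicalSpace X] [BaireSpace X]
    [Countable ι] {G A : Set X} {C : ι → Set X} (hG : IsOpen G) (hGC : G ⊆ ⋃ i, C i) (hAG : A ⊆ G)
    (hAC : ∀ i, Disjoint A (interior (closure (C i)))) : IsNowhereDense A := by
  by_contra hA
  obtain ⟨a, ha⟩ : (interior (closure A)).Nonempty := nonempty_iff_ne_empty.2 hA
  obtain ⟨b, hbW, hbA⟩ := mem_closure_iff.1 (interior_subset ha) _ isOpen_interior ha
  let W := interior (closure A) ∩ G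
  have hW : ¬IsMeagre (⋃ i, W ∩ C i) := by
    rw [← inter_iUnion, inter_eq_left.2 (inter_subset_right.trans hGC)]
    exact not_isMeagre_of_isOpen (isOpen_interior.inter hG) ⟨b, hbW, hAG hbA⟩
  obtain ⟨i, hi⟩ : ∃ i, ¬IsMeagre (W ∩ C i) := by
    contrapose! hW
    exact isMeagre_iUnion hW
  obtain ⟨e, he⟩ : (interior (closure (W ∩ C i))).Nonempty :=
    nonempty_iff_ne_empty.2 fun h => hi (IsNowhereDense.isMeagre h)
  have heA : e ∈ closure A := closure_minimal
    ((inter_subset_left.trans inter_subset_left).trans interior_subset) isClosed_closure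
    (interior_subset he)
  obtain ⟨y, hy, hyA⟩ := mem_closure_iff.1 heA _ isOpen_interior he
  exact disjoint_left.1 (hAC i) hyA (interior_mono (closure_mono inter_subset_right) hy)

lemma exists_isOpen_residual_mem_of_iUnion_eq_univ {X ι : Type*} [TopologicalSpace X] [BaireSpace X]
    [Nonempty X] [Countable ι] {A : ι → Set X} (hA : ∀ i, BaireMeasurableSet (A i))
    (hU : ⋃ i, A i = univ) :
    ∃ i, ∃ U : Set X, IsOpen U ∧ U.Nonempty ∧ ∀ᵇ v, v ∈ U → v ∈ A i := by
  obtain ⟨i, hi⟩ : ∃ i, ¬IsMeagre (A i) := by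
    by_contra! h
    exact not_isMeagre_of_isOpen isOpen_univ univ_nonempty (hU ▸ isMeagre_iUnion h)
  obtain ⟨U, hUo, hAU⟩ := (hA i).residualEq_isOpen
  refine ⟨i, U, hUo, ?_, hAU.mem_iff.mono fun v hv => hv.2⟩
  by_contra hUe
  rw [not_nonempty_iff_eq_empty.1 hUe] at hAU
  exact hi (hAU.mem_iff.mono fun v hv hvA => hv.1 hvA)

variable {X Z : Type*} [AddCommGroup X] [Module ℝ X] [TopologicalSpace X] [ContinuousAdd X]
  [ContinuousSMul ℝ X]

lemma isOpenMap_const_add_smul {a : ℝ} (ha : a ≠ 0) (b : X) :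
    IsOpenMap fun u : X => b + a • u :=
  ((Homeomorph.smulOfNeZero a ha).trans (Homeomorph.addLeft b)).isOpenMap

lemma tendsto_add_smul_nhds_zero (x v : X) :
    Tendsto (fun t : ℝ => x + t • v) (𝓝 0) (𝓝 x) := by
  have h : Continuous fun t : ℝ => x + t • v := by fun_prop
  simpa using h.tendsto 0

/- A generic direction `u` makes all points `v₀ + u / (n + 1)` generic at once, so the value at `v₀`
is a limit of values in `K`. -/
lemma mem_of_residual_mem_of_tendsto_ray [BaireSpace X] [TopologicalSpace Z] {g : X → Z}
    {U : Set X} {K : Set Z} {v₀ : X} (hU : IsOpen U) (hK : IsClosed K)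
    (h : ∀ᵇ v, v ∈ U → g v ∈ K) (hv₀ : v₀ ∈ U)
    (hg : ∀ u, Tendsto (fun s : ℝ => g (v₀ + s • u)) (𝓝[>] 0) (𝓝 (g v₀))) : g v₀ ∈ K := by
  let s : ℕ → ℝ := fun n => 1 / ((n : ℝ) + 1)
  have hs_pos (n : ℕ) : 0 < s n := Nat.one_div_pos_of_nat
  have hs : Tendsto s atTop (𝓝 0) := tendsto_one_div_add_atTop_nhds_zero_nat
  have hgeneric : ∀ᵇ u, ∀ n, v₀ + s n • u ∈ U → g (v₀ + s n • u) ∈ K :=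
    eventually_countable_forall.2 fun n =>
      (tendsto_residual_of_isOpenMap (by fun_prop)
        (isOpenMap_const_add_smul (hs_pos n).ne' v₀)).eventually h
  obtain ⟨u, hu⟩ := (dense_of_mem_residual hgeneric).nonempty
  have hmemU : ∀ᶠ n in atTop, v₀ + s n • u ∈ U :=
    ((tendsto_add_smul_nhds_zero v₀ u).comp hs).eventually (hU.mem_nhds hv₀)
  have hs_right : Tendsto s atTop (𝓝[>] 0) := tendsto_nhdsWithin_iff.2 ⟨hs, .of_forall hs_pos⟩
  exact hK.mem_of_tendsto ((hg u).comp hs_right) (hmemU.mono hu)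

end Baire

section DirectionalPorosity

variable {X : Type*} [NormedAddCommGroup X] [NormedSpace ℝ X] {A B : Set X} {x : X}

lemma DirPorousAt.mono (h : DirPorousAt B x) (hAB : A ⊆ B) : DirPorousAt A x := by
  obtain ⟨v, hv, p, hp, t, ht, ht₀, hB⟩ := h
  exact ⟨v, hv, p, hp, t, ht, ht₀,
    fun n => subset_eq_empty (inter_subset_inter_right _ hAB) (hB n)⟩

lemma dirPorousAt_of_frequently_disjoint [Nontrivial X] {w : X} {p : ℝ} (hp : 0 < p)
    (h : ∃ᶠ t in 𝓝[>] (0 : ℝ), Disjoint (ball (x + t • w) (p * t)) A) : DirPorousAt A x := by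
  obtain ⟨t, ht, ht'⟩ := exists_seq_forall_of_frequently (h.and_eventually self_mem_nhdsWithin)
  have ht_pos (n : ℕ) : 0 < t n := (ht' n).2
  obtain ⟨e, he⟩ : ∃ e : X, ‖e‖ = p / 2 := exists_norm_eq X (half_pos hp).le
  -- `w` may vanish; one of `w` and the small perturbation `w + e` does not.
  obtain ⟨w', hw', hww'⟩ : ∃ w' : X, w' ≠ 0 ∧ ‖w' - w‖ ≤ p / 2 := by
    by_cases hw : w = 0
    · exact ⟨e, norm_pos_iff.1 (he ▸ half_pos hp), by rw [hw, sub_zero, he]⟩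
    · exact ⟨w, hw, by rw [sub_self, norm_zero]; exact (half_pos hp).le⟩
  refine ⟨w', hw', p / 2, half_pos hp, t, ht_pos, ht.mono_right nhdsWithin_le_nhds, fun n => ?_⟩
  refine ((ht' n).1.mono_left (ball_subset_ball' ?_)).inter_eq
  rw [dist_add_left, dist_eq_norm, ← smul_sub, norm_smul, Real.norm_of_nonneg (ht_pos n).le]
  nlinarith [mul_le_mul_of_nonneg_left hww' (ht_pos n).le]

lemma DirPorousAt.notMem_interior_closure (h : DirPorousAt A x) : x ∉ interior (closure A) := by
  intro hx
  obtain ⟨v, -, p, hp, t, ht, ht₀, hA⟩ := h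
  have hlim : Tendsto (fun n => x + t n • v) atTop (𝓝 x) :=
    (tendsto_add_smul_nhds_zero x v).comp ht₀
  obtain ⟨n, hn⟩ := (hlim.eventually (isOpen_interior.mem_nhds hx)).exists
  have hne := mem_closure_iff.1 (interior_subset hn) _ isOpen_ball
    (mem_ball_self (mul_pos hp (ht n)))
  exact hne.ne_empty (hA n)

lemma sigmaDirPorous_of_subset_iUnion {ι : Type*} [Countable ι] {C : ι → Set X}
    (hAC : A ⊆ ⋃ i, C i) (h : ∀ i, ∀ x ∈ A ∩ C i, DirPorousAt (A ∩ C i) x) :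
    SigmaDirPorous A := by
  rcases isEmpty_or_nonempty ι with hι | hι
  · rw [iUnion_of_empty, subset_empty_iff] at hAC
    exact ⟨fun _ => ∅, by simpa using hAC, fun _ _ hx => hx.elim⟩
  · obtain ⟨g, hg⟩ := exists_surjective_nat ι
    refine ⟨fun n => A ∩ C (g n), ?_, fun n => h (g n)⟩
    rw [← inter_iUnion, hg.iUnion_comp, inter_eq_left.2 hAC]

end DirectionalPorosity

section Cones

variable {X Y : Type*} [NormedAddCommGroup X] [NormedSpace ℝ X] [NormedAddCommGroup Y]
  {G : Set X} {f : X → Y} {x : X}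

/-- `f` is radially Lipschitz at `x`: on every ray issuing from `x`, the increments of `f` are at
most linear near `x`, with a constant that may depend on the ray. This is the part of Gâteaux
differentiability that provides estimates on cones. -/
def RadiallyLipschitzAt (f : X → Y) (x : X) : Prop :=
  ∀ v : X, (fun t : ℝ => f (x + t • v) - f x) =O[𝓝[>] 0] fun t => t

/-- The vertices `y ∈ G` of cones, with axis `c` and aperture `r`, on which `f` grows at most
linearly. The single parameter `m` bounds both the slope (`m`) and the height (`1 / m`) of the
cone, so that these sets are indexed by countably many parameters. -/
def coneSet (G : Set X) (f : X → Y) (m : ℝ) (c : X) (r : ℝ) : Set X :=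
  {y ∈ G | ∀ t : ℝ, 0 < t → m * t < 1 →
    ∀ z ∈ G ∩ ball (y + t • c) (t * r), ‖f z - f y‖ ≤ m * t}

/-- The directions `v` such that `f` grows with slope at most `m` on the ray from `x` along `v`.
Only rational parameters are tested, which keeps the set Baire measurable. -/
def ratConeDirections (G : Set X) (f : X → Y) (m : ℝ) (x : X) : Set X :=
  {v | ∀ q : ℚ, 0 < (q : ℝ) → m * q < 1 → x + (q : ℝ) • v ∈ G →
    ‖f (x + (q : ℝ) • v) - f x‖ ≤ m * q}

lemma RadiallyLipschitzAt.tendsto (h : RadiallyLipschitzAt f x) (v : X) :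
    Tendsto (fun t : ℝ => f (x + t • v)) (𝓝[>] 0) (𝓝 (f x)) :=
  tendsto_sub_nhds_zero_iff.1 ((h v).trans_tendsto nhdsWithin_le_nhds)

lemma RadiallyLipschitzAt.iUnion_ratConeDirections (h : RadiallyLipschitzAt f x) (G : Set X) :
    ⋃ m : ℕ, ratConeDirections G f m x = univ := by
  refine eq_univ_of_forall fun v => mem_iUnion.2 ?_
  obtain ⟨K, hK⟩ := (h v).bound
  obtain ⟨δ, hδ, hKδ⟩ := mem_nhdsGT_iff_exists_Ioo_subset.1 hK
  obtain ⟨m, hm⟩ := exists_nat_gt (max K (1 / δ))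
  have hmδ : 1 < m * δ := (div_lt_iff₀ hδ).1 ((le_max_right _ _).trans_lt hm)
  refine ⟨m, fun q hq hmq _ => ?_⟩
  have hqδ : (q : ℝ) < δ := lt_of_mul_lt_mul_left (hmq.trans hmδ) m.cast_nonneg
  calc ‖f (x + (q : ℝ) • v) - f x‖ ≤ K * ‖(q : ℝ)‖ := hKδ ⟨hq, hqδ⟩
    _ = K * q := by rw [Real.norm_of_nonneg hq.le]
    _ ≤ m * q := by gcongr; exact (le_max_left _ _).trans hm.le

lemma baireMeasurableSet_ratConeDirections
    (hf : ∀ U, IsOpen U → BaireMeasurableSet (G ∩ f ⁻¹' U)) (m : ℝ) (x : X) :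
    BaireMeasurableSet (ratConeDirections G f m x) := by
  simp only [ratConeDirections, ofPred_forall]
  refine .iInter fun q => .iInter fun hq => .iInter fun _ => ?_
  have hopen : IsOpen {y : Y | m * q < ‖y - f x‖} := isOpen_lt (by fun_prop) (by fun_prop)
  convert ((hf _ hopen).preimage (by fun_prop) (isOpenMap_const_add_smul hq.ne' x)).compl using 1
  ext v
  simp

lemma inv_smul_sub_mem_ball_iff {t r : ℝ} (ht : 0 < t) {y z c : X} :
    t⁻¹ • (z - y) ∈ ball c r ↔ z ∈ ball (y + t • c) (t * r) := by
  have h : t⁻¹ • (z - y) - c = t⁻¹ • (z - (y + t • c)) := by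
    rw [← sub_sub, smul_sub t⁻¹ (z - y), inv_smul_smul₀ ht.ne']
  rw [mem_ball_iff_norm, mem_ball_iff_norm, h, norm_smul, norm_inv, Real.norm_of_nonneg ht.le,
    inv_mul_lt_iff₀ ht]

lemma norm_sub_le_of_residual_mem_ratConeDirections [BaireSpace X] (hG : IsOpen G)
    (hrad : ∀ z ∈ G, RadiallyLipschitzAt f z) {m r : ℝ} {c y z : X}
    (h : ∀ᵇ v, v ∈ ball c r → v ∈ ratConeDirections G f m y) {q : ℚ} (hq : 0 < (q : ℝ))
    (hmq : m * q < 1) (hz : z ∈ G ∩ ball (y + (q : ℝ) • c) (q * r)) :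
    ‖f z - f y‖ ≤ m * q := by
  let v₀ := (q : ℝ)⁻¹ • (z - y)
  have hv₀ : y + (q : ℝ) • v₀ = z := by rw [smul_inv_smul₀ hq.ne', add_sub_cancel]
  have hU : IsOpen (ball c r ∩ (fun v => y + (q : ℝ) • v) ⁻¹' G) :=
    isOpen_ball.inter (hG.preimage (by fun_prop))
  have hmem : f (y + (q : ℝ) • v₀) ∈ closedBall (f y) (m * q) := by
    refine mem_of_residual_mem_of_tendsto_ray (g := fun v => f (y + (q : ℝ) • v)) hU
      isClosed_closedBall (h.mono fun v hv hvU => ?_)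
      ⟨(inv_smul_sub_mem_ball_iff hq).2 hz.2, by simpa only [mem_preimage, hv₀] using hz.1⟩
      fun u => ?_
    · exact mem_closedBall_iff_norm.2 (hv hvU.1 q hq hmq hvU.2)
    · simpa only [smul_add, ← add_assoc, hv₀, smul_comm (q : ℝ)] using
        (hrad z hz.1).tendsto ((q : ℝ) • u)
  rwa [hv₀, mem_closedBall_iff_norm] at hmem

lemma mem_coneSet_of_residual_mem_ratConeDirections [BaireSpace X] (hG : IsOpen G)
    (hrad : ∀ z ∈ G, RadiallyLipschitzAt f z) {m r : ℝ} {c y : X} (hy : y ∈ G)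
    (h : ∀ᵇ v, v ∈ ball c r → v ∈ ratConeDirections G f m y) : y ∈ coneSet G f m c r := by
  refine ⟨hy, fun t ht hmt z ⟨hz, hzt⟩ => ?_⟩
  have hlim : Tendsto (fun s => m * s) (𝓝 t) (𝓝 (m * t)) := tendsto_id.const_mul m
  have hcone : IsOpen {s : ℝ | z ∈ ball (y + s • c) (s * r)} :=
    isOpen_lt (f := fun s => dist z (y + s • c)) (by fun_prop) (by fun_prop)
  have hnear : ∀ᶠ s in 𝓝 t, 0 < s ∧ m * s < 1 ∧ z ∈ ball (y + s • c) (s * r) :=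
    (lt_mem_nhds ht).and ((hlim.eventually_lt_const hmt).and (hcone.mem_nhds hzt))
  have hrat : ∃ᶠ s in 𝓝 t, s ∈ range ((↑) : ℚ → ℝ) :=
    mem_closure_iff_frequently.1 (Rat.denseRange_cast t)
  refine ge_of_tendsto_of_frequently hlim ((hrat.and_eventually hnear).mono ?_)
  rintro _ ⟨⟨q, rfl⟩, hq, hmq, hzq⟩
  exact norm_sub_le_of_residual_mem_ratConeDirections hG hrad h hq hmq ⟨hz, hzq⟩

lemma exists_mem_coneSet [BaireSpace X] (hG : IsOpen G)
    (hf : ∀ U, IsOpen U → BaireMeasurableSet (G ∩ f ⁻¹' U))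
    (hrad : ∀ z ∈ G, RadiallyLipschitzAt f z) {d : ℕ → X} (hd : DenseRange d) (hx : x ∈ G) :
    ∃ m i k : ℕ, x ∈ coneSet G f m (d i) (1 / ((k : ℝ) + 1)) := by
  obtain ⟨m, U, hU, ⟨u, hu⟩, hUm⟩ := exists_isOpen_residual_mem_of_iUnion_eq_univ
    (fun m : ℕ => baireMeasurableSet_ratConeDirections hf m x)
    ((hrad x hx).iUnion_ratConeDirections G)
  obtain ⟨δ, hδ, hball⟩ := Metric.isOpen_iff.1 hU u hu
  obtain ⟨k, hk⟩ := exists_nat_one_div_lt (half_pos hδ)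
  obtain ⟨i, hi⟩ := hd.exists_dist_lt u (Nat.one_div_pos_of_nat (α := ℝ) (n := k))
  refine ⟨m, i, k, mem_coneSet_of_residual_mem_ratConeDirections hG hrad hx ?_⟩
  refine hUm.mono fun v hv hvi => hv (hball (ball_subset_ball' ?_ hvi))
  rw [dist_comm]
  linarith

lemma disjoint_ball_coneSet {m r τ : ℝ} {c a b : X} (hτ : 0 < τ) (hmτ : m * τ < 1) (ha : a ∈ G)
    (hb : b ∈ G ∩ ball a (τ * r / 2)) (hab : 2 * (m * τ) < ‖f b - f a‖) :
    Disjoint (ball (a - τ • c) (τ * r / 2)) (coneSet G f m c r) := by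
  refine disjoint_left.2 fun y hy hyC => hab.not_ge ?_
  have hay : dist a (y + τ • c) < τ * r / 2 := by
    rwa [mem_ball', dist_eq_norm, sub_sub, add_comm (τ • c), ← dist_eq_norm] at hy
  have hby : dist b (y + τ • c) < τ * r := by
    linarith [dist_triangle b a (y + τ • c), mem_ball.1 hb.2]
  have hay' : dist a (y + τ • c) < τ * r := by linarith [dist_nonneg.trans_lt hay]
  have hfa := hyC.2 τ hτ hmτ a ⟨ha, hay'⟩
  have hfb := hyC.2 τ hτ hmτ b ⟨hb.1, hby⟩
  linarith [norm_sub_le_norm_sub_add_norm_sub (f b) (f y) (f a), norm_sub_rev (f a) (f y)]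

end Cones

section Hadamard

variable {X Y : Type*} [NormedAddCommGroup X] [NormedSpace ℝ X] [NormedAddCommGroup Y]
  [NormedSpace ℝ Y] {G : Set X} {f : X → Y} {x v : X} {y : Y}

lemma GateauxDiffAt.hasLineDerivAt {L : X →L[ℝ] Y} (h : GateauxDiffAt f x L) (v : X) :
    HasLineDerivAt ℝ f (L v) x v :=
  hasLineDerivAt_iff_tendsto_slope_zero.2 (h v)

lemma GateauxDiffAt.radiallyLipschitzAt {L : X →L[ℝ] Y} (h : GateauxDiffAt f x L) :
    RadiallyLipschitzAt f x := fun v => by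
  simpa using (HasDerivAt.isBigO_sub (h.hasLineDerivAt v)).mono nhdsWithin_le_nhds

lemma hadamardDerivAt_of_isLittleO (h : HasLineDerivAt ℝ f y x v)
    (ho : (fun p : ℝ × X => f (x + p.1 • p.2) - f (x + p.1 • v)) =o[𝓝[≠] 0 ×ˢ 𝓝 v] Prod.fst) :
    HadamardDerivAt f x v y := by
  have hquot := (h.tendsto_slope_zero.comp tendsto_fst).add ho.tendsto_inv_smul_nhds_zero
  rw [add_zero] at hquot
  refine hquot.congr fun p => ?_
  rw [Function.comp_apply, ← smul_add, sub_add_sub_cancel']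

lemma exists_frequently_lt_norm_sub_of_not_hadamardDerivAt (h : HasLineDerivAt ℝ f y x v)
    (hn : ¬HadamardDerivAt f x v y) : ∃ ε > (0 : ℝ),
      ∃ᶠ p : ℝ × X in 𝓝[≠] 0 ×ˢ 𝓝 v, ε * |p.1| < ‖f (x + p.1 • p.2) - f (x + p.1 • v)‖ := by
  have ho := mt (hadamardDerivAt_of_isLittleO h) hn
  rw [Asymptotics.isLittleO_iff] at ho
  push Not at ho
  exact ho

lemma nontrivial_of_not_hadamardDerivAt (h : HasLineDerivAt ℝ f y x v)
    (hn : ¬HadamardDerivAt f x v y) : Nontrivial X := by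
  by_contra hX
  rw [not_nontrivial_iff_subsingleton] at hX
  refine hn ((h.tendsto_slope_zero.comp tendsto_fst).congr fun p => ?_)
  rw [Function.comp_apply, Subsingleton.elim p.2 v]

lemma frequently_disjoint_ball_coneSet (hG : IsOpen G) (hx : x ∈ G)
    (h : HasLineDerivAt ℝ f y x v) (hn : ¬HadamardDerivAt f x v y) (m : ℝ) {r : ℝ} (hr : 0 < r)
    (c : X) : ∃ κ > (0 : ℝ), ∃ᶠ t in 𝓝[≠] (0 : ℝ),
      Disjoint (ball (x + t • v - (κ * |t|) • c) (κ * |t| * r / 2)) (coneSet G f m c r) := by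
  obtain ⟨ε, hε, hfreq⟩ := exists_frequently_lt_norm_sub_of_not_hadamardDerivAt h hn
  obtain ⟨κ, hκ, hmκ⟩ : ∃ κ > 0, 2 * (m * κ) ≤ ε := by
    refine ⟨ε / (2 * (|m| + 1)), by positivity, ?_⟩
    rw [← mul_assoc, mul_div_assoc', div_le_iff₀ (by positivity)]
    nlinarith [le_abs_self m]
  refine ⟨κ, hκ, ?_⟩
  have hfst : Tendsto Prod.fst (𝓝[≠] (0 : ℝ) ×ˢ 𝓝 v) (𝓝 0) :=
    tendsto_fst.mono_right nhdsWithin_le_nhds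
  have hne : ∀ᶠ p in 𝓝[≠] (0 : ℝ) ×ˢ 𝓝 v, p.1 ≠ 0 :=
    tendsto_fst.eventually self_mem_nhdsWithin
  have hnear : ∀ᶠ p in 𝓝[≠] (0 : ℝ) ×ˢ 𝓝 v, p.2 ∈ ball v (κ * r / 2) :=
    tendsto_snd.eventually (ball_mem_nhds v (by positivity))
  have hGz : ∀ᶠ p in 𝓝[≠] (0 : ℝ) ×ˢ 𝓝 v, x + p.1 • p.2 ∈ G := by
    have hlim := (hfst.smul tendsto_snd).const_add x
    rw [zero_smul, add_zero] at hlim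
    exact hlim.eventually (hG.mem_nhds hx)
  have hGv : ∀ᶠ p in 𝓝[≠] (0 : ℝ) ×ˢ 𝓝 v, x + p.1 • v ∈ G :=
    ((tendsto_add_smul_nhds_zero x v).comp hfst).eventually (hG.mem_nhds hx)
  have hheight : ∀ᶠ p in 𝓝[≠] (0 : ℝ) ×ˢ 𝓝 v, m * (κ * |p.1|) < 1 := by
    have hlim := (hfst.abs.const_mul κ).const_mul m
    rw [abs_zero, mul_zero, mul_zero] at hlim
    exact hlim.eventually (gt_mem_nhds one_pos)
  refine tendsto_fst.frequently ((hfreq.and_eventually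
    (hne.and (hnear.and (hGz.and (hGv.and hheight))))).mono ?_)
  rintro ⟨t, z⟩ ⟨hlt, ht, hz, hzG, hvG, hmt⟩
  have ht_pos : 0 < |t| := abs_pos.2 ht
  refine disjoint_ball_coneSet (mul_pos hκ ht_pos) hmt hvG ⟨hzG, ?_⟩ (lt_of_le_of_lt ?_ hlt)
  · rw [mem_ball, dist_add_left, dist_smul₀, Real.norm_eq_abs]
    calc |t| * dist z v < |t| * (κ * r / 2) := by gcongr; exact hz
      _ = κ * |t| * r / 2 := by ring
  · calc 2 * (m * (κ * |t|)) = 2 * (m * κ) * |t| := by ring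
      _ ≤ ε * |t| := by gcongr

lemma dirPorousAt_coneSet (hG : IsOpen G) (hx : x ∈ G)
    (h : HasLineDerivAt ℝ f y x v) (hn : ¬HadamardDerivAt f x v y) (m : ℝ) {r : ℝ} (hr : 0 < r)
    (c : X) : DirPorousAt (coneSet G f m c r) x := by
  have := nontrivial_of_not_hadamardDerivAt h hn
  obtain ⟨κ, hκ, hfreq⟩ := frequently_disjoint_ball_coneSet hG hx h hn m hr c
  have hp : 0 < κ * r / 2 := by positivity
  rw [← Iio_union_Ioi, nhdsWithin_union, frequently_sup] at hfreq
  rcases hfreq with hneg | hpos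
  · have hlim : Tendsto (fun t : ℝ => -t) (𝓝[<] 0) (𝓝[>] 0) := by
      simpa using tendsto_neg_nhdsLT (a := (0 : ℝ))
    refine dirPorousAt_of_frequently_disjoint (w := -v - κ • c) hp
      (hlim.frequently ((hneg.and_eventually self_mem_nhdsWithin).mono ?_))
    rintro t ⟨hdisj, ht : t < 0⟩
    rw [abs_of_neg ht] at hdisj
    convert hdisj using 2
    · module
    · ring
  · refine dirPorousAt_of_frequently_disjoint (w := v - κ • c) hp
      ((hpos.and_eventually self_mem_nhdsWithin).mono ?_)
    rintro t ⟨hdisj, ht : 0 < t⟩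
    rw [abs_of_pos ht] at hdisj
    convert hdisj using 2
    · module
    · ring

theorem stmt16_general [BaireSpace X] [TopologicalSpace.SeparableSpace X] (hG : IsOpen G)
    (hf : ∀ U, IsOpen U → BaireMeasurableSet (G ∩ f ⁻¹' U))
    (hrad : ∀ x ∈ G, RadiallyLipschitzAt f x) :
    ∃ A : Set X, IsNowhereDense A ∧ SigmaDirPorous A ∧
      ∀ x ∈ G \ A, ∀ v y, HasLineDerivAt ℝ f y x v → HadamardDerivAt f x v y := by
  obtain ⟨d, hd⟩ := TopologicalSpace.exists_dense_seq X
  let C : ℕ × ℕ × ℕ → Set X := fun j => coneSet G f j.1 (d j.2.1) (1 / ((j.2.2 : ℝ) + 1))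
  let A : Set X := {x ∈ G | ∃ v y, HasLineDerivAt ℝ f y x v ∧ ¬HadamardDerivAt f x v y}
  have hAG : A ⊆ G := fun x hx => hx.1
  have hGC : G ⊆ ⋃ j, C j := fun x hx => by
    obtain ⟨m, i, k, hmem⟩ := exists_mem_coneSet hG hf hrad hd hx
    exact mem_iUnion.2 ⟨(m, i, k), hmem⟩
  have hporous : ∀ j, ∀ x ∈ A, DirPorousAt (C j) x := by
    rintro j x ⟨hx, v, y, hline, hn⟩
    exact dirPorousAt_coneSet hG hx hline hn _ Nat.one_div_pos_of_nat _
  refine ⟨A, ?_, ?_, fun x hx v y hline => ?_⟩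
  · exact isNowhereDense_of_disjoint_interior_closure hG hGC hAG
      fun j => disjoint_left.2 fun x hx => (hporous j x hx).notMem_interior_closure
  · exact sigmaDirPorous_of_subset_iUnion (hAG.trans hGC)
      fun j x hx => (hporous j x hx.1).mono inter_subset_right
  · by_contra hn
    exact hx.2 ⟨hx.1, v, y, hline, hn⟩

end Hadamard

theorem stmt16 {X Y : Type*} [NormedAddCommGroup X] [NormedSpace ℝ X] [CompleteSpace X]
    [TopologicalSpace.SeparableSpace X]
    [MeasurableSpace X] [BorelSpace X]
    [NormedAddCommGroup Y] [NormedSpace ℝ Y] [CompleteSpace Y]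
    [MeasurableSpace Y] [BorelSpace Y]
    (G : Set X) (hG : IsOpen G) (f : X → Y) (hmeas : Measurable f)
    (hGat : ∀ x ∈ G, ∃ L : X →L[ℝ] Y, GateauxDiffAt f x L) :
    ∃ A : Set X, IsNowhereDense A ∧ SigmaDirPorous A ∧
      ∀ x ∈ G \ A, ∃ L : X →L[ℝ] Y, HadamardDiffAt f x L := by
  obtain ⟨A, hnd, hpor, hHad⟩ := stmt16_general hG
    (fun U hU => (hG.measurableSet.inter (hmeas hU.measurableSet)).baireMeasurableSet)
    fun x hx => (hGat x hx).elim fun _ hL => hL.radiallyLipschitzAt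
  refine ⟨A, hnd, hpor, fun x hx => (hGat x hx.1).imp fun L hL v => ?_⟩
  exact hHad x hx v (L v) (hL.hasLineDerivAt v)
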